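/- Let T be a measure-preserving action of H₃(ℝ) on a standard probability space (X, ℬ, μ) such that the central flow (T_{c(t)})_{t∈ℝ} is ergodic. If T is rigid, then the flow {T_{c(t)} : t ∈ ℝ} is rigid, i.e. there is a sequence of reals t_n with |t_n| → ∞ such that μ(T_{c(t_n)} A ∩ B) → μ(A ∩ B) for all A, B ∈ ℬ. -/

import Mathlib

open Filter Topology Pointwise

/-- The real Heisenberg group `H₃(ℝ)`: `⟨a, b, c⟩` encodes the upper unitriangular `3 × 3`
matrix with entry `a` at position `(1,2)`, `b` at position `(2,3)` and `c` at position `(1,3)`. -/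
@[ext] structure H3 : Type where
  a : ℝ
  b : ℝ
  c : ℝ

namespace H3

instance : Mul H3 := ⟨fun g h => ⟨g.a + h.a, g.b + h.b, g.c + h.c + g.a * h.b⟩⟩
instance : One H3 := ⟨⟨0, 0, 0⟩⟩
instance : Inv H3 := ⟨fun g => ⟨-g.a, -g.b, g.a * g.b - g.c⟩⟩

@[simp] lemma mul_a (g h : H3) : (g * h).a = g.a + h.a := rfl
@[simp] lemma mul_b (g h : H3) : (g * h).b = g.b + h.b := rfl
@[simp] lemma mul_c (g h : H3) : (g * h).c = g.c + h.c + g.a * h.b := rfl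
@[simp] lemma one_a : (1 : H3).a = 0 := rfl
@[simp] lemma one_b : (1 : H3).b = 0 := rfl
@[simp] lemma one_c : (1 : H3).c = 0 := rfl
@[simp] lemma inv_a (g : H3) : g⁻¹.a = -g.a := rfl
@[simp] lemma inv_b (g : H3) : g⁻¹.b = -g.b := rfl
@[simp] lemma inv_c (g : H3) : g⁻¹.c = g.a * g.b - g.c := rfl

instance : Group H3 where
  mul_assoc g h k := by ext <;> simp <;> ring
  one_mul g := by ext <;> simp
  mul_one g := by ext <;> simp
  inv_mul_cancel g := by ext <;> simp

def toProd (g : H3) : ℝ × ℝ × ℝ := (g.a, g.b, g.c)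
def ofProd (p : ℝ × ℝ × ℝ) : H3 := ⟨p.1, p.2.1, p.2.2⟩

/-- The natural (Euclidean) topology of `H₃(ℝ)`. -/
instance : TopologicalSpace H3 := TopologicalSpace.induced toProd inferInstance
/-- The Borel σ-algebra of `H₃(ℝ)`. -/
instance : MeasurableSpace H3 := MeasurableSpace.comap toProd inferInstance

/-- A Haar measure on `H₃(ℝ)` (Lebesgue measure in the upper-triangular coordinates);
it satisfies `haar (box α β γ) = 8αβγ`. -/
noncomputable def haar : MeasureTheory.Measure H3 :=
  MeasureTheory.Measure.map ofProd MeasureTheory.volume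

/-- The one-parameter subgroup `a(t)` (entry `t` at position `(1,2)`). -/
def A (t : ℝ) : H3 := ⟨t, 0, 0⟩
/-- The one-parameter subgroup `b(t)` (entry `t` at position `(2,3)`). -/
def B (t : ℝ) : H3 := ⟨0, t, 0⟩
/-- The central one-parameter subgroup `c(t)` (entry `t` at position `(1,3)`). -/
def C (t : ℝ) : H3 := ⟨0, 0, t⟩

/-- The flip automorphism `θ` of `H₃(ℝ)`: `θ(a(t)) = b(t)`, `θ(b(t)) = a(t)`, `θ(c(t)) = c(-t)`. -/
def flip (g : H3) : H3 := ⟨g.b, g.a, g.a * g.b - g.c⟩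

/-- The box `I(α,β,γ) = {c(t₃)b(t₂)a(t₁) : |t₁| ≤ α, |t₂| ≤ β, |t₃| ≤ γ}`. -/
def box (α β γ : ℝ) : Set H3 := {g : H3 | |g.a| ≤ α ∧ |g.b| ≤ β ∧ |g.c| ≤ γ}

end H3

/-- A (jointly measurable) measure-preserving action of the Heisenberg group `H₃(ℝ)`
by invertible measure-preserving transformations on a measure space `(X, μ)`. -/
structure H3System : Type 1 where
  X : Type
  [ms : MeasurableSpace X]
  μ : MeasureTheory.Measure X
  T : H3 → X → X
  t_one : ∀ x, T 1 x = x
  t_mul : ∀ g h x, T (g * h) x = T g (T h x)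
  t_meas : Measurable fun p : H3 × X => T p.1 p.2
  t_mp : ∀ g, MeasureTheory.MeasurePreserving (T g) μ μ

attribute [instance] H3System.ms

section BaseDefs

open MeasureTheory

variable {Y : Type*} [MeasurableSpace Y]

/-- Mixing for a family of measure-preserving maps indexed by `H₃(ℝ)`:
`ν (S g A ∩ B) → ν A · ν B` as `g → ∞`. -/
def MixingFam (ν : Measure Y) (S : H3 → Y → Y) : Prop :=
  ∀ A B : Set Y, MeasurableSet A → MeasurableSet B →
    Tendsto (fun g : H3 => ν (S g '' A ∩ B)) (cocompact H3) (𝓝 (ν A * ν B))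

/-- Mixing of order `l` (with `l+1` sets) for a family of maps indexed by `H₃(ℝ)`. -/
def MixingOfOrderFam (ν : Measure Y) (S : H3 → Y → Y) (l : ℕ) : Prop :=
  ∀ ε : ℝ, 0 < ε → ∀ A : Fin (l + 1) → Set Y, (∀ i, MeasurableSet (A i)) →
    ∃ K : Set H3, IsCompact K ∧
      ∀ g : Fin (l + 1) → H3, (∀ i j, i ≠ j → g i * (g j)⁻¹ ∉ K) →
        |(ν (⋂ i, S (g i) '' A i)).toReal - ∏ i, (ν (A i)).toReal| < ε

/-- Mixing for a flow (a family of maps indexed by `ℝ`). -/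
def FlowMixingFam (ν : Measure Y) (S : ℝ → Y → Y) : Prop :=
  ∀ A B : Set Y, MeasurableSet A → MeasurableSet B →
    Tendsto (fun t : ℝ => ν (S t '' A ∩ B)) (cocompact ℝ) (𝓝 (ν A * ν B))

/-- Mixing of order `l` (with `l+1` sets) for a flow. -/
def FlowMixingOfOrderFam (ν : Measure Y) (S : ℝ → Y → Y) (l : ℕ) : Prop :=
  ∀ ε : ℝ, 0 < ε → ∀ A : Fin (l + 1) → Set Y, (∀ i, MeasurableSet (A i)) →
    ∃ K : Set ℝ, IsCompact K ∧
      ∀ t : Fin (l + 1) → ℝ, (∀ i j, i ≠ j → t i - t j ∉ K) →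
        |(ν (⋂ i, S (t i) '' A i)).toReal - ∏ i, (ν (A i)).toReal| < ε

namespace H3System

variable (s : H3System)

/-- `(X, ℬ, μ)` is a standard probability space. -/
def IsStdProb : Prop := StandardBorelSpace s.X ∧ IsProbabilityMeasure s.μ

/-- Freeness: for almost every point, only the identity fixes it. -/
def Free : Prop := ∀ᵐ x ∂s.μ, ∀ g : H3, s.T g x = x → g = 1

/-- Mixing of the whole `H₃(ℝ)`-action. -/
def Mixing : Prop := MixingFam s.μ s.T

/-- Mixing of the central flow `(T_{c(t)})_{t∈ℝ}`. -/
def CentralMixing : Prop := FlowMixingFam s.μ fun t => s.T (H3.C t)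

/-- Ergodicity of the central flow `(T_{c(t)})_{t∈ℝ}`. -/
def CentralErgodic : Prop :=
  ∀ A : Set s.X, MeasurableSet A → (∀ t : ℝ, s.T (H3.C t) ⁻¹' A = A) →
    s.μ A = 0 ∨ s.μ Aᶜ = 0

/-- Rigidity: some sequence `gₙ → ∞` satisfies `μ(T_{gₙ}A ∩ B) → μ(A ∩ B)`. -/
def Rigid : Prop :=
  ∃ g : ℕ → H3, Tendsto g atTop (cocompact H3) ∧
    ∀ A B : Set s.X, MeasurableSet A → MeasurableSet B →
      Tendsto (fun n => s.μ (s.T (g n) '' A ∩ B)) atTop (𝓝 (s.μ (A ∩ B)))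

/-- Weak mixing: the diagonal product action on `(X × X, μ × μ)` is ergodic. -/
def WeaklyMixing : Prop :=
  ∀ A : Set (s.X × s.X), MeasurableSet A →
    (∀ g : H3, (fun p : s.X × s.X => (s.T g p.1, s.T g p.2)) ⁻¹' A = A) →
    (s.μ.prod s.μ) A = 0 ∨ (s.μ.prod s.μ) Aᶜ = 0

/-- Zero type (mixing in infinite measure): `μ(T_g D₁ ∩ D₂) → 0` as `g → ∞`
for sets of finite measure. -/
def ZeroType : Prop :=
  ∀ D₁ D₂ : Set s.X, MeasurableSet D₁ → MeasurableSet D₂ → s.μ D₁ < ⊤ → s.μ D₂ < ⊤ →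
    Tendsto (fun g : H3 => s.μ (s.T g '' D₁ ∩ D₂)) (cocompact H3) (𝓝 0)

end H3System

/-- A (one-sided) Følner sequence of relatively compact subsets of positive finite
Haar measure in `H₃(ℝ)`. -/
def IsFolnerSeq (F : ℕ → Set H3) : Prop :=
  (∀ n, IsCompact (closure (F n)) ∧ 0 < H3.haar (F n) ∧ H3.haar (F n) < ⊤) ∧
  ∀ g : H3,
    Tendsto (fun n => H3.haar (symmDiff ((g * ·) '' F n) (F n)) / H3.haar (F n)) atTop (𝓝 0)

/-- A Rokhlin tower `(Y, f, F)` for the system `s`: `f : Y → F` is measurable and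
`f⁻¹(gH) = T_g f⁻¹(H)` for Borel `H ⊆ F` and `g` with `gH ⊆ F`. -/
def IsRokhlinTower (s : H3System) (Y : Set s.X) (f : s.X → H3) (F : Set H3) : Prop :=
  MeasurableSet Y ∧ Measurable f ∧ (∀ x ∈ Y, f x ∈ F) ∧
  ∀ (H : Set H3) (g : H3), MeasurableSet H → H ⊆ F → (g * ·) '' H ⊆ F →
    Y ∩ f ⁻¹' ((g * ·) '' H) = s.T g '' (Y ∩ f ⁻¹' H)

/-- Rank one along a given sequence `(Fₙ)`: there are Rokhlin towers `(Yₙ, fₙ, Fₙ)` such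
that every measurable set is approximated by unions of levels of the towers. -/
def RankOneAlong (s : H3System) (F : ℕ → Set H3) : Prop :=
  ∃ (Y : ℕ → Set s.X) (f : ℕ → s.X → H3),
    (∀ n, IsRokhlinTower s (Y n) (f n) (F n)) ∧
    ∀ Bset : Set s.X, MeasurableSet Bset →
      ∃ Hs : ℕ → Set H3, (∀ n, MeasurableSet (Hs n) ∧ Hs n ⊆ F n) ∧
        Tendsto (fun n => s.μ (symmDiff Bset (Y n ∩ (f n) ⁻¹' Hs n))) atTop (𝓝 0)

/-- Rank one: rank one along some Følner sequence. -/
def RankOne (s : H3System) : Prop := ∃ F : ℕ → Set H3, IsFolnerSeq F ∧ RankOneAlong s F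

section Joinings

variable (s : H3System) {ι : Type} (φ : ι → H3)

/-- A 2-fold self-joining of the sub-action `(T_{φ i})_{i∈ι}`: a measure on `X × X`,
invariant under the diagonal action, whose both marginals equal `μ`. -/
def IsSelfJoining2 (ν : Measure (s.X × s.X)) : Prop :=
  IsProbabilityMeasure ν ∧ ν.map Prod.fst = s.μ ∧ ν.map Prod.snd = s.μ ∧
  ∀ i : ι, MeasurePreserving (fun p : s.X × s.X => (s.T (φ i) p.1, s.T (φ i) p.2)) ν ν

/-- An ergodic 2-fold self-joining. -/
def IsErgodicSelfJoining2 (ν : Measure (s.X × s.X)) : Prop :=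
  IsSelfJoining2 s φ ν ∧
  ∀ A : Set (s.X × s.X), MeasurableSet A →
    (∀ i : ι, (fun p : s.X × s.X => (s.T (φ i) p.1, s.T (φ i) p.2)) ⁻¹' A = A) →
    ν A = 0 ∨ ν Aᶜ = 0

/-- The centralizer of the sub-action `(T_{φ i})_{i∈ι}`: invertible measure-preserving
transformations commuting (a.e.) with every `T_{φ i}`. -/
def InCentralizer (R : s.X → s.X) : Prop :=
  Measurable R ∧ MeasurePreserving R s.μ s.μ ∧
  (∃ R' : s.X → s.X, Measurable R' ∧ MeasurePreserving R' s.μ s.μ ∧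
    (∀ᵐ x ∂s.μ, R' (R x) = x) ∧ (∀ᵐ x ∂s.μ, R (R' x) = x)) ∧
  ∀ i : ι, ∀ᵐ x ∂s.μ, R (s.T (φ i) x) = s.T (φ i) (R x)

/-- The off-diagonal (graph) self-joining `μ_R` determined by `R`,
i.e. `μ_R(A × B) = μ(A ∩ R⁻¹B) = μ(RA ∩ B)`. -/
noncomputable def graphJoining (R : s.X → s.X) : Measure (s.X × s.X) :=
  s.μ.map fun x => (x, R x)

/-- 2-fold simplicity of the sub-action `(T_{φ i})_{i∈ι}`: every ergodic 2-fold
self-joining is either off-diagonal over the centralizer or product measure. -/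
def TwoFoldSimple : Prop :=
  ∀ ν : Measure (s.X × s.X), IsErgodicSelfJoining2 s φ ν →
    (∃ R : s.X → s.X, InCentralizer s φ R ∧ ν = graphJoining s R) ∨ ν = s.μ.prod s.μ

/-- An `l`-fold self-joining of the sub-action `(T_{φ i})_{i∈ι}`. -/
def IsSelfJoining (l : ℕ) (ν : Measure (Fin l → s.X)) : Prop :=
  IsProbabilityMeasure ν ∧ (∀ k : Fin l, ν.map (fun x => x k) = s.μ) ∧
  ∀ i : ι, MeasurePreserving (fun (x : Fin l → s.X) k => s.T (φ i) (x k)) ν ν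

/-- Simplicity: 2-fold simple, and for every `l ≥ 2` the only `l`-fold self-joining all of
whose pairwise 2-dimensional projections are `μ × μ` is the product measure. -/
def Simple : Prop :=
  TwoFoldSimple s φ ∧
  ∀ l : ℕ, 2 ≤ l → ∀ ν : Measure (Fin l → s.X), IsSelfJoining s φ l ν →
    (∀ j k : Fin l, j ≠ k → ν.map (fun x => (x j, x k)) = s.μ.prod s.μ) →
    ν = Measure.pi fun _ => s.μ

/-- The centralizer of the sub-action `(T_{φ i})_{i∈ι}` equals `{T_g : g ∈ H₃(ℝ)}`
(modulo null sets). -/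
def CentralizerEq : Prop :=
  ∀ R : s.X → s.X, InCentralizer s φ R ↔ ∃ g : H3, ∀ᵐ x ∂s.μ, R x = s.T g x

/-- Minimal self-joinings (MSJ) of the sub-action `(T_{φ i})_{i∈ι}`: simple, and the
centralizer consists of the transformations of the sub-action itself. -/
def HasMSJ : Prop :=
  Simple s φ ∧ ∀ R : s.X → s.X, InCentralizer s φ R → ∃ i : ι, ∀ᵐ x ∂s.μ, R x = s.T (φ i) x

end Joinings

end BaseDefs

section Statement
open MeasureTheory

/-!
The displacement `μ (g • A ∆ A)` is subadditive in `g` and is only transported by conjugation, so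
rigid sequences are closed under products, inverses and commutators with a fixed element. Let
`g n = ⟨a n, b n, c n⟩` be rigid. If `a` or `b` is unbounded, then so are the commutators
`⁅g n, b(1)⁆ = c(a n)` or `⁅g n, a(-1)⁆ = c(b n)`, which are central. Otherwise `a n → α`,
`b n → β` and `|c n| → ∞` along a subsequence. Since `g` acts weakly continuously, the limit
`x = ⟨α, β, 0⟩` of `⟨a n, b n, 0⟩ = c(c n)⁻¹ g n` may replace it: `c(c n) x` is rigid. The unknown
factor `x` cancels in the quotients of two terms of this sequence, so `c(c (φ n) - c n)` is rigid
for every `φ → ∞`, and a sparse `φ` makes the exponents tend to infinity.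

Weak continuity at the identity follows by averaging over a compact neighbourhood `K` of `1`: by
Fubini, `μ (g⁻¹ • A ∆ A) * ν K` is the integral over `x` of the `ν`-measure in `K` of the
displacement of `{t | t • x ∈ A}` by a translation, and translations are continuous in measure.
-/

open scoped symmDiff commutatorElement

section GroupAction

variable {G X ι : Type*} [Group G] [MulAction G X] [MeasurableSpace X] {μ : Measure X}

/-- A family `g : ι → G` of elements of a group acting on `(X, μ)` is rigid along `l` if its
elements tend to the identity of `X` in the weak topology, i.e. `μ (g i • A ∆ A) → 0` for every
measurable `A`. For the equivalence with the convergence `μ (g i • A ∩ B) → μ (A ∩ B)` see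
`rigidAlong_iff_tendsto_measure_smul_inter`. -/
def RigidAlong (μ : Measure X) (l : Filter ι) (g : ι → G) : Prop :=
  ∀ A : Set X, MeasurableSet A → Tendsto (fun i => μ ((g i • A) ∆ A)) l (𝓝 0)

theorem RigidAlong.comp {κ : Type*} {l : Filter ι} {l' : Filter κ} {g : ι → G} {φ : κ → ι}
    (hg : RigidAlong μ l g) (hφ : Tendsto φ l' l) : RigidAlong μ l' (g ∘ φ) :=
  fun A hA => (hg A hA).comp hφ

theorem rigidAlong_iff_tendsto_measure_smul_inter [MeasurableConstSMul G X] {l : Filter ι}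
    {g : ι → G} :
    RigidAlong μ l g ↔ ∀ A B : Set X, MeasurableSet A → MeasurableSet B →
      Tendsto (fun i => μ ((g i • A) ∩ B)) l (𝓝 (μ (A ∩ B))) := by
  constructor
  · intro hg A B hA _
    have h_lower : Tendsto (fun i => μ (A ∩ B) - μ ((g i • A) ∆ A)) l (𝓝 (μ (A ∩ B))) := by
      simpa only [tsub_zero] using
        ENNReal.Tendsto.sub tendsto_const_nhds (hg A hA) (.inr ENNReal.zero_ne_top)
    have h_upper : Tendsto (fun i => μ (A ∩ B) + μ ((g i • A) ∆ A)) l (𝓝 (μ (A ∩ B))) := by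
      simpa only [add_zero] using tendsto_const_nhds.add (hg A hA)
    have inter_subset (C D : Set X) : C ∩ B ⊆ (D ∩ B) ∪ (C ∆ D) := by
      grind
    refine tendsto_of_tendsto_of_tendsto_of_le_of_le h_lower h_upper (fun i => ?_) fun i => ?_
    · rw [tsub_le_iff_right, symmDiff_comm]
      exact (measure_mono (inter_subset _ _)).trans (measure_union_le _ _)
    · exact (measure_mono (inter_subset _ _)).trans (measure_union_le _ _)
  · intro hg A hA
    have h_sum := (hg A Aᶜ hA hA.compl).add (hg Aᶜ A hA.compl hA)
    simp only [Set.inter_compl_self, Set.compl_inter_self, measure_empty, add_zero] at h_sum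
    refine h_sum.congr fun i => ?_
    rw [measure_symmDiff_eq (hA.const_smul (g i)).nullMeasurableSet hA.nullMeasurableSet,
      Set.smul_set_compl, Set.inter_comm _ A, Set.sdiff_eq, Set.sdiff_eq]

section InvariantMeasure

variable [SMulInvariantMeasure G X μ]

theorem measure_mul_smul_symmDiff_le (g h : G) (A : Set X) :
    μ (((g * h) • A) ∆ A) ≤ μ ((g • A) ∆ A) + μ ((h • A) ∆ A) :=
  calc μ (((g * h) • A) ∆ A) ≤ μ (((g * h) • A) ∆ (g • A)) + μ ((g • A) ∆ A) :=
        measure_symmDiff_le _ _ _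
    _ = μ ((h • A) ∆ A) + μ ((g • A) ∆ A) := by
        rw [mul_smul, ← Set.smul_set_symmDiff, measure_smul]
    _ = μ ((g • A) ∆ A) + μ ((h • A) ∆ A) := add_comm _ _

theorem measure_conj_smul_symmDiff (k g : G) (A : Set X) :
    μ (((k * g * k⁻¹) • A) ∆ A) = μ ((g • k⁻¹ • A) ∆ (k⁻¹ • A)) := by
  rw [mul_smul, mul_smul, ← measure_smul μ k⁻¹, Set.smul_set_symmDiff, inv_smul_smul]

namespace RigidAlong

variable {l : Filter ι} {g h : ι → G}

theorem mul (hg : RigidAlong μ l g) (hh : RigidAlong μ l h) :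
    RigidAlong μ l fun i => g i * h i := fun A hA =>
  tendsto_of_tendsto_of_tendsto_of_le_of_le tendsto_const_nhds
    (by simpa only [add_zero] using (hg A hA).add (hh A hA)) (fun _ => zero_le)
    fun i => measure_mul_smul_symmDiff_le (g i) (h i) A

theorem inv (hg : RigidAlong μ l g) : RigidAlong μ l fun i => (g i)⁻¹ := fun A hA => by
  simpa only [measure_inv_smul_symmDiff, symmDiff_comm A] using hg A hA

variable [MeasurableConstSMul G X]

theorem conj (hg : RigidAlong μ l g) (k : G) : RigidAlong μ l fun i => k * g i * k⁻¹ :=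
  fun A hA => by
    simpa only [measure_conj_smul_symmDiff] using hg (k⁻¹ • A) (hA.const_smul k⁻¹)

theorem commutator (hg : RigidAlong μ l g) (k : G) : RigidAlong μ l fun i => ⁅g i, k⁆ := by
  simpa only [commutatorElement_def, mul_assoc] using hg.mul (hg.inv.conj k)

end RigidAlong

end InvariantMeasure

end GroupAction

section Translation

variable {G : Type*} [Group G] [MeasurableSpace G]

section MeasurableMul

variable [MeasurableMul G]

theorem restrict_preimage_mul_left_symmDiff_le (ν : Measure G) {K L E : Set G} (hK : 1 ∈ K)
    (hKL : K * K ⊆ L) (hE : MeasurableSet E) {g : G} (hg : g ∈ K) :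
    ν.restrict K (((g * ·) ⁻¹' E) ∆ E) ≤ ν (((g * ·) ⁻¹' (E ∩ L)) ∆ (E ∩ L)) := by
  rw [Measure.restrict_apply (((measurable_const_mul g) hE).symmDiff hE)]
  refine measure_mono fun t ⟨ht, htK⟩ => ?_
  have htL : t ∈ L := hKL (by simpa only [one_mul] using Set.mul_mem_mul hK htK)
  have hgtL : g * t ∈ L := hKL (Set.mul_mem_mul hg htK)
  simpa only [Set.mem_symmDiff, Set.mem_preimage, Set.mem_inter_iff, htL, hgtL, and_true] using ht

theorem restrict_preimage_mul_left_symmDiff_le_two_mul (ν : Measure G) [ν.IsMulLeftInvariant]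
    {K L E : Set G} (hK : 1 ∈ K) (hKL : K * K ⊆ L) (hE : MeasurableSet E) {g : G} (hg : g ∈ K) :
    ν.restrict K (((g * ·) ⁻¹' E) ∆ E) ≤ 2 * ν.restrict L E :=
  calc ν.restrict K (((g * ·) ⁻¹' E) ∆ E)
      ≤ ν (((g * ·) ⁻¹' (E ∩ L)) ∆ (E ∩ L)) := restrict_preimage_mul_left_symmDiff_le ν hK hKL hE hg
    _ ≤ ν ((g * ·) ⁻¹' (E ∩ L)) + ν (E ∩ L) :=
        (measure_mono Set.symmDiff_subset_union).trans (measure_union_le _ _)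
    _ = 2 * ν.restrict L E := by
        rw [measure_preimage_mul, ← two_mul, Measure.restrict_apply hE]

end MeasurableMul

variable [TopologicalSpace G] [IsTopologicalGroup G] [BorelSpace G]

theorem tendsto_measure_preimage_mul_left_symmDiff_nhds_one (ν : Measure G) [ν.IsMulLeftInvariant]
    [ν.InnerRegularCompactLTTop] [IsLocallyFiniteMeasure ν] {E : Set G} (hE : NullMeasurableSet E ν)
    (hνE : ν E ≠ ⊤) : Tendsto (fun g : G => ν (((g * ·) ⁻¹' E) ∆ E)) (𝓝 1) (𝓝 0) := by
  let mulLeft : C(G, C(G, G)) := ContinuousMap.curry ⟨fun p : G × G => p.1 * p.2, continuous_mul⟩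
  have mulLeft_one : ⇑(mulLeft 1) = id := funext one_mul
  have h_tendsto := tendsto_measure_symmDiff_preimage_nhds_zero (mulLeft.continuous.tendsto 1)
    (.of_forall fun g => measurePreserving_mul_left ν g) (measurePreserving_mul_left ν 1) hE hνE
  rwa [mulLeft_one] at h_tendsto

theorem tendsto_restrict_preimage_mul_left_symmDiff_nhds_one (ν : Measure G)
    [ν.IsMulLeftInvariant] [ν.InnerRegularCompactLTTop] [IsLocallyFiniteMeasure ν]
    {K E : Set G} (hK : K ∈ 𝓝 1) (hKc : IsCompact K) (hE : MeasurableSet E) :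
    Tendsto (fun g : G => ν.restrict K (((g * ·) ⁻¹' E) ∆ E)) (𝓝 1) (𝓝 0) := by
  have hE' : MeasurableSet (E ∩ closure (K * K)) := hE.inter isClosed_closure.measurableSet
  have hνE' : ν (E ∩ closure (K * K)) ≠ ⊤ :=
    measure_ne_top_of_subset Set.inter_subset_right (hKc.mul hKc).closure.measure_ne_top
  refine tendsto_of_tendsto_of_tendsto_of_le_of_le' tendsto_const_nhds
    (tendsto_measure_preimage_mul_left_symmDiff_nhds_one ν hE'.nullMeasurableSet hνE')
    (.of_forall fun _ => zero_le) ?_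
  filter_upwards [hK] with g hg
  exact restrict_preimage_mul_left_symmDiff_le ν (mem_of_mem_nhds hK) subset_closure hE hg

end Translation

section Continuity

variable {G X : Type*} [Group G] [MulAction G X]

/-- The set of group elements carrying `x` into `A`. It turns the displacement of `A` by the action
into the displacement of subsets of `G` by translations. -/
def visitTimes (G : Type*) {X : Type*} [SMul G X] (A : Set X) (x : X) : Set G := {t | t • x ∈ A}

theorem visitTimes_inv_smul_symmDiff (g : G) (A : Set X) (x : X) :
    visitTimes G ((g⁻¹ • A) ∆ A) x = ((g * ·) ⁻¹' visitTimes G A x) ∆ visitTimes G A x := by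
  ext t
  simp only [visitTimes, Set.mem_ofPred_eq, Set.mem_symmDiff, Set.mem_preimage, mul_smul,
    Set.mem_inv_smul_set_iff]

variable [MeasurableSpace G] [MeasurableSpace X] [MeasurableSMul₂ G X]

theorem measurable_measure_visitTimes (ν : Measure G) [SFinite ν] {A : Set X}
    (hA : MeasurableSet A) : Measurable fun x => ν (visitTimes G A x) :=
  measurable_measure_prodMk_right (measurable_smul hA)

variable {μ : Measure X} [SMulInvariantMeasure G X μ]

theorem lintegral_measure_visitTimes [SFinite μ] (ν : Measure G) [SFinite ν] {A : Set X}
    (hA : MeasurableSet A) : ∫⁻ x, ν (visitTimes G A x) ∂μ = μ A * ν Set.univ := by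
  have h_meas : MeasurableSet {p : G × X | p.1 • p.2 ∈ A} := measurable_smul hA
  calc ∫⁻ x, ν (visitTimes G A x) ∂μ = (ν.prod μ) {p : G × X | p.1 • p.2 ∈ A} :=
        (Measure.prod_apply_symm h_meas).symm
    _ = ∫⁻ t, μ ((t • ·) ⁻¹' A) ∂ν := Measure.prod_apply h_meas
    _ = μ A * ν Set.univ := by simp only [measure_preimage_smul, lintegral_const]

variable [TopologicalSpace G] [IsTopologicalGroup G] [BorelSpace G] [LocallyCompactSpace G]
  [FirstCountableTopology G]

theorem tendsto_measure_smul_symmDiff_nhds_one [SFinite μ] {A : Set X} (hA : MeasurableSet A)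
    (hμA : μ A ≠ ⊤) : Tendsto (fun g : G => μ ((g • A) ∆ A)) (𝓝 1) (𝓝 0) := by
  let ν : Measure G := Measure.haar
  obtain ⟨K, hKc, hK⟩ := exists_compact_mem_nhds (1 : G)
  have hνK : ν K ≠ ⊤ := hKc.measure_ne_top
  have hνKK : ν (closure (K * K)) ≠ ⊤ := (hKc.mul hKc).closure.measure_ne_top
  have : IsFiniteMeasure (ν.restrict K) := isFiniteMeasure_restrict.2 hνK
  have : IsFiniteMeasure (ν.restrict (closure (K * K))) := isFiniteMeasure_restrict.2 hνKK
  have hgA (g : G) : MeasurableSet ((g⁻¹ • A) ∆ A) := (hA.const_smul g⁻¹).symmDiff hA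
  have hvisit (x : X) : MeasurableSet (visitTimes G A x) := (measurable_smul_const x) hA
  have h_bound : ∀ᶠ g : G in 𝓝 1, ∀ x, ν.restrict K (visitTimes G ((g⁻¹ • A) ∆ A) x) ≤
      2 * ν.restrict (closure (K * K)) (visitTimes G A x) := by
    filter_upwards [hK] with g hg x
    rw [visitTimes_inv_smul_symmDiff]
    exact restrict_preimage_mul_left_symmDiff_le_two_mul ν (mem_of_mem_nhds hK) subset_closure
      (hvisit x) hg
  have h_lim (x : X) :
      Tendsto (fun g : G => ν.restrict K (visitTimes G ((g⁻¹ • A) ∆ A) x)) (𝓝 1) (𝓝 0) := by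
    simpa only [visitTimes_inv_smul_symmDiff] using
      tendsto_restrict_preimage_mul_left_symmDiff_nhds_one ν hK hKc (hvisit x)
  have h_integral : Tendsto (fun g : G => μ ((g • A) ∆ A) * ν K) (𝓝 1) (𝓝 0) := by
    have h_dom := tendsto_lintegral_filter_of_dominated_convergence (μ := μ) _
      (.of_forall fun g => measurable_measure_visitTimes (ν.restrict K) (hgA g))
      (h_bound.mono fun g hg => .of_forall hg) ?_ (.of_forall h_lim)
    · simpa only [lintegral_measure_visitTimes _ (hgA _), measure_inv_smul_symmDiff,
        symmDiff_comm A, Measure.restrict_apply_univ, lintegral_zero] using h_dom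
    · rw [lintegral_const_mul _ (measurable_measure_visitTimes _ hA),
        lintegral_measure_visitTimes _ hA, Measure.restrict_apply_univ]
      finiteness
  have hνK0 : ν K ≠ 0 := (Measure.measure_pos_of_mem_nhds ν hK).ne'
  simpa only [zero_mul, ENNReal.mul_inv_cancel_right hνK0 hνK] using
    ENNReal.Tendsto.mul_const h_integral (.inr (ENNReal.inv_ne_top.2 hνK0))

theorem rigidAlong_of_tendsto_one [IsFiniteMeasure μ] {ι : Type*} {l : Filter ι} {g : ι → G}
    (hg : Tendsto g l (𝓝 1)) : RigidAlong μ l g :=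
  fun A hA => (tendsto_measure_smul_symmDiff_nhds_one hA (measure_ne_top μ A)).comp hg

end Continuity

section Sequences

theorem exists_subseq_tendsto_cobounded_or_nhds {E : Type*} [PseudoMetricSpace E] [ProperSpace E]
    (u : ℕ → E) : ∃ φ : ℕ → ℕ, StrictMono φ ∧
      (Tendsto (u ∘ φ) atTop (Bornology.cobounded E) ∨ ∃ x, Tendsto (u ∘ φ) atTop (𝓝 x)) := by
  by_cases h : Disjoint (Bornology.cobounded E) (map u atTop)
  · obtain ⟨s, hs, hs_bounded⟩ := disjoint_cobounded_iff.1 h.symm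
    obtain ⟨x, -, φ, hφ, hx⟩ :=
      tendsto_subseq_of_frequently_bounded hs_bounded (Eventually.frequently hs)
    exact ⟨φ, hφ, .inr ⟨x, hx⟩⟩
  · have : (Bornology.cobounded E).IsCountablyGenerated :=
      Metric.comap_dist_right_atTop (u 0) ▸ inferInstance
    obtain ⟨φ, hφ, h_lim⟩ := subseq_tendsto_of_neBot (neBot_iff.2 (disjoint_iff.not.1 h))
    exact ⟨φ, hφ, .inl h_lim⟩

theorem exists_tendsto_comp_sub_cobounded {E : Type*} [SeminormedAddCommGroup E] {t : ℕ → E}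
    (ht : Tendsto t atTop (Bornology.cobounded E)) : ∃ φ : ℕ → ℕ, Tendsto φ atTop atTop ∧
      Tendsto (fun n => t (φ n) - t n) atTop (Bornology.cobounded E) := by
  have h_far (n : ℕ) : ∃ m ≥ n, (n : ℝ) ≤ ‖t m - t n‖ := by
    have h_sub : Tendsto (fun m => ‖t m - t n‖) atTop atTop :=
      tendsto_norm_atTop_iff_cobounded.2 ((tendsto_sub_const_cobounded (t n)).comp ht)
    exact ((eventually_ge_atTop n).and (h_sub.eventually_ge_atTop n)).exists
  choose φ hφ h_norm using h_far
  exact ⟨φ, tendsto_atTop_mono hφ tendsto_id, tendsto_norm_atTop_iff_cobounded.1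
    (tendsto_atTop_mono h_norm tendsto_natCast_atTop_atTop)⟩

end Sequences

namespace H3

theorem isInducing_toProd : IsInducing toProd := ⟨rfl⟩

/-- The entry coordinates identify the Heisenberg group with `ℝ³` as a topological space. -/
def toProdHomeomorph : H3 ≃ₜ ℝ × ℝ × ℝ :=
  Equiv.toHomeomorphOfIsInducing ⟨toProd, ofProd, fun _ => rfl, fun _ => rfl⟩ isInducing_toProd

instance : BorelSpace H3 := ⟨by
  rw [show instMeasurableSpace = MeasurableSpace.comap toProd inferInstance from rfl,
    BorelSpace.measurable_eq (α := ℝ × ℝ × ℝ), borel_comap]⟩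

instance : LocallyCompactSpace H3 := toProdHomeomorph.isClosedEmbedding.locallyCompactSpace

instance : FirstCountableTopology H3 := isInducing_toProd.firstCountableTopology

@[fun_prop] theorem continuous_a : Continuous a := continuous_fst.comp isInducing_toProd.continuous

@[fun_prop] theorem continuous_b : Continuous b :=
  continuous_snd.fst.comp isInducing_toProd.continuous

@[fun_prop] theorem continuous_c : Continuous c :=
  continuous_snd.snd.comp isInducing_toProd.continuous

theorem tendsto_nhds_iff {ι : Type*} {l : Filter ι} {g : ι → H3} {x : H3} :
    Tendsto g l (𝓝 x) ↔ Tendsto (fun i => (g i).a) l (𝓝 x.a) ∧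
      Tendsto (fun i => (g i).b) l (𝓝 x.b) ∧ Tendsto (fun i => (g i).c) l (𝓝 x.c) := by
  rw [isInducing_toProd.tendsto_nhds_iff, Prod.tendsto_iff, Prod.tendsto_iff]
  rfl

instance : IsTopologicalGroup H3 where
  continuous_mul := isInducing_toProd.continuous_iff.2 <|
    show Continuous fun p : H3 × H3 =>
      (p.1.a + p.2.a, p.1.b + p.2.b, p.1.c + p.2.c + p.1.a * p.2.b) by fun_prop
  continuous_inv := isInducing_toProd.continuous_iff.2 <|
    show Continuous fun g : H3 => (-g.a, -g.b, g.a * g.b - g.c) by fun_prop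

theorem commutator_eq_C (g h : H3) : ⁅g, h⁆ = C (g.a * h.b - h.a * g.b) := by
  ext
  · simp [commutatorElement_def, C]
  · simp [commutatorElement_def, C]
  · simp only [commutatorElement_def, C, mul_a, mul_c, inv_a, inv_b, inv_c]
    ring

theorem C_mul_mk (a b c : ℝ) : C c * ⟨a, b, 0⟩ = ⟨a, b, c⟩ := by
  ext <;> simp [C]

theorem C_sub (t u : ℝ) : C (t - u) = C t * (C u)⁻¹ := by
  ext <;> simp [C, sub_eq_add_neg]

end H3

section HeisenbergAction

variable {X : Type*} [MeasurableSpace X] [MulAction H3 X] [MeasurableSMul₂ H3 X] {μ : Measure X}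
  [IsFiniteMeasure μ] [SMulInvariantMeasure H3 X μ] {g : ℕ → H3}

theorem RigidAlong.exists_rigidAlong_C_of_tendsto {α β : ℝ} (hg : RigidAlong μ atTop g)
    (ha : Tendsto (fun n => (g n).a) atTop (𝓝 α)) (hb : Tendsto (fun n => (g n).b) atTop (𝓝 β))
    (hc : Tendsto (fun n => (g n).c) atTop (Bornology.cobounded ℝ)) :
    ∃ t : ℕ → ℝ, Tendsto t atTop (Bornology.cobounded ℝ) ∧
      RigidAlong μ atTop fun n => H3.C (t n) := by
  let p (n : ℕ) : H3 := ⟨(g n).a, (g n).b, 0⟩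
  let x : H3 := ⟨α, β, 0⟩
  have hp : Tendsto (fun n => (p n)⁻¹ * x) atTop (𝓝 1) := by
    have hpx : Tendsto p atTop (𝓝 x) := H3.tendsto_nhds_iff.2 ⟨ha, hb, tendsto_const_nhds⟩
    simpa only [inv_mul_cancel] using hpx.inv.mul_const x
  have hx : RigidAlong μ atTop fun n => H3.C (g n).c * x := by
    have h_factor (n : ℕ) : g n * ((p n)⁻¹ * x) = H3.C (g n).c * x := by
      rw [← mul_assoc, mul_inv_eq_of_eq_mul (H3.C_mul_mk (g n).a (g n).b (g n).c).symm]
    simpa only [h_factor] using hg.mul (rigidAlong_of_tendsto_one hp)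
  obtain ⟨φ, hφ, h_sub⟩ := exists_tendsto_comp_sub_cobounded hc
  refine ⟨_, h_sub, ?_⟩
  have h_quotient (n : ℕ) :
      H3.C ((g (φ n)).c - (g n).c) = H3.C (g (φ n)).c * x * (H3.C (g n).c * x)⁻¹ := by
    rw [H3.C_sub]
    group
  simp only [h_quotient]
  exact (hx.comp hφ).mul hx.inv

theorem RigidAlong.exists_rigidAlong_C_of_tendsto_cocompact (hg : RigidAlong μ atTop g)
    (hg_lim : Tendsto g atTop (cocompact H3)) :
    ∃ t : ℕ → ℝ, Tendsto t atTop (Bornology.cobounded ℝ) ∧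
      RigidAlong μ atTop fun n => H3.C (t n) := by
  obtain ⟨φ, hφ, ha | ⟨α, hα⟩⟩ := exists_subseq_tendsto_cobounded_or_nhds fun n => (g n).a
  · refine ⟨_, ha, ?_⟩
    simpa [H3.commutator_eq_C, H3.B, Function.comp_def] using
      (hg.comp hφ.tendsto_atTop).commutator (H3.B 1)
  obtain ⟨ψ, hψ, hb | ⟨β, hβ⟩⟩ := exists_subseq_tendsto_cobounded_or_nhds fun n => (g (φ n)).b
  · refine ⟨_, hb, ?_⟩
    simpa [H3.commutator_eq_C, H3.A, Function.comp_def] using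
      (hg.comp (hφ.comp hψ).tendsto_atTop).commutator (H3.A (-1))
  obtain ⟨χ, hχ, hc | ⟨γ, hγ⟩⟩ := exists_subseq_tendsto_cobounded_or_nhds fun n => (g (φ (ψ n))).c
  · exact (hg.comp (hφ.comp (hψ.comp hχ)).tendsto_atTop).exists_rigidAlong_C_of_tendsto
      (hα.comp (hψ.comp hχ).tendsto_atTop) (hβ.comp hχ.tendsto_atTop) hc
  · have h_lim : Tendsto (g ∘ φ ∘ ψ ∘ χ) atTop (𝓝 ⟨α, β, γ⟩) := H3.tendsto_nhds_iff.2
      ⟨hα.comp (hψ.comp hχ).tendsto_atTop, hβ.comp hχ.tendsto_atTop, hγ⟩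
    have h_cocompact := hg_lim.comp (hφ.comp (hψ.comp hχ)).tendsto_atTop
    exact absurd h_cocompact (h_lim.not_tendsto (disjoint_nhds_cocompact _))

end HeisenbergAction

namespace H3System

variable (s : H3System)

instance : MulAction H3 s.X where
  smul := s.T
  one_smul := s.t_one
  mul_smul := s.t_mul

instance : MeasurableSMul₂ H3 s.X := ⟨s.t_meas⟩

instance : SMulInvariantMeasure H3 s.X s.μ :=
  ⟨fun g _ hA => (s.t_mp g).measure_preimage hA.nullMeasurableSet⟩

theorem rigidAlong_iff {ι : Type*} {l : Filter ι} {g : ι → H3} :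
    RigidAlong s.μ l g ↔ ∀ A B : Set s.X, MeasurableSet A → MeasurableSet B →
      Tendsto (fun i => s.μ (s.T (g i) '' A ∩ B)) l (𝓝 (s.μ (A ∩ B))) :=
  rigidAlong_iff_tendsto_measure_smul_inter

end H3System

theorem central_flow_rigid_of_rigid_general (s : H3System) [IsFiniteMeasure s.μ]
    (hrig : s.Rigid) :
    ∃ t : ℕ → ℝ, Tendsto (fun n => |t n|) atTop atTop ∧
      ∀ A B : Set s.X, MeasurableSet A → MeasurableSet B →
        Tendsto (fun n => s.μ (s.T (H3.C (t n)) '' A ∩ B)) atTop (𝓝 (s.μ (A ∩ B))) := by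
  obtain ⟨g, hg_lim, hg⟩ := hrig
  obtain ⟨t, ht_lim, ht⟩ := (s.rigidAlong_iff.2 hg).exists_rigidAlong_C_of_tendsto_cocompact hg_lim
  exact ⟨t, tendsto_norm_atTop_iff_cobounded.2 ht_lim, s.rigidAlong_iff.1 ht⟩

/-- **Corollary 3.8(iv).** Let `T` be a measure-preserving action of `H₃(ℝ)` on a standard
probability space whose central flow `(T_{c(t)})_{t∈ℝ}` is ergodic. If `T` is rigid, then
the central flow `{T_{c(t)} : t ∈ ℝ}` is rigid: there are reals `tₙ` with `|tₙ| → ∞` and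
`μ(T_{c(tₙ)}A ∩ B) → μ(A ∩ B)` for all measurable `A, B`. -/
theorem central_flow_rigid_of_rigid (s : H3System) (hstd : s.IsStdProb)
    (herg : s.CentralErgodic) (hrig : s.Rigid) :
    ∃ t : ℕ → ℝ, Tendsto (fun n => |t n|) atTop atTop ∧
      ∀ A B : Set s.X, MeasurableSet A → MeasurableSet B →
        Tendsto (fun n => s.μ (s.T (H3.C (t n)) '' A ∩ B)) atTop (𝓝 (s.μ (A ∩ B))) := by
  have := hstd.2
  exact central_flow_rigid_of_rigid_general s hrig

end Statement
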